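/- arXiv:1302.4285 — 2 statements merged into one kernel-verified Lean document; each statement's English description precedes it below -/
import Mathlib

section
/- The special value ζ₂(2,1,1,5,3,3; G₂) equals (5/4)·ζ(4)·ζ(11) + (1043857/23328)·ζ(2)·ζ(13) − (41971423/559872)·ζ(15). -/
/-- The zeta-function of the root system `G₂` at a tuple of natural number exponents:
`ζ₂(s₁,…,s₆;G₂) = ∑_{m,n≥1} 1/(m^{s₁} n^{s₂} (m+n)^{s₃} (m+2n)^{s₄} (m+3n)^{s₅} (2m+3n)^{s₆})`. -/
noncomputable def zetaG2 (s₁ s₂ s₃ s₄ s₅ s₆ : ℕ) : ℝ :=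
  ∑' (m : ℕ+) (n : ℕ+),
    1 / (((m : ℕ) : ℝ) ^ s₁ * ((n : ℕ) : ℝ) ^ s₂ * (((m : ℕ) : ℝ) + ((n : ℕ) : ℝ)) ^ s₃ *
      (((m : ℕ) : ℝ) + 2 * ((n : ℕ) : ℝ)) ^ s₄ * (((m : ℕ) : ℝ) + 3 * ((n : ℕ) : ℝ)) ^ s₅ *
      (2 * ((m : ℕ) : ℝ) + 3 * ((n : ℕ) : ℝ)) ^ s₆)

/-! The involution `n ↦ -m - n` permutes the six linear forms up to sign and shows that for fixed
`m` the sum over all `n ∈ ℤ` vanishes. As the summand is odd under `(m, n) ↦ (-m, -n)`, the sums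
over `n ≥ 1` for `m` and `-m` then agree, so twice the zeta value is the sum over `n ≥ 1` and all
`m ∈ ℤ`. For fixed `n`, expand the summand into partial fractions in `m`: the poles of odd order
cancel in the symmetric principal value, and those of even order `k` contribute multiples of `ζ(k)`,
depending on the parity of `n` for the half-integral pole `m = -3n/2`. The summand is `0` at its
integral poles (`1 / 0 = 0`), which costs a correction proportional to `1 / n ^ 15`; summing over
`n ≥ 1` gives the value. -/

section LatticeSums

open Filter Finset Topology SummationFilter

section Antisymmetric

variable {G : Type*} [AddCommGroup G] [TopologicalSpace G] [IsTopologicalAddGroup G]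

lemma hasSum_sub_add_one_symmetricIco {f : ℤ → G} (hf : Tendsto f cofinite (𝓝 0)) :
    HasSum (fun m ↦ f m - f (m + 1)) 0 (symmetricIco ℤ) := by
  simp only [hasSum_symmetricIco_int_iff, sum_Ico_int_sub]
  have h_top : Tendsto (fun N : ℕ ↦ f N) atTop (𝓝 0) :=
    hf.comp (Nat.cofinite_eq_atTop ▸ Nat.cast_injective.tendsto_cofinite)
  have h_bot : Tendsto (fun N : ℕ ↦ f (-N)) atTop (𝓝 0) :=
    hf.comp (Nat.cofinite_eq_atTop ▸ (neg_injective.comp Nat.cast_injective).tendsto_cofinite)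
  simpa using h_bot.sub h_top

lemma hasSum_sub_add_symmetricIco {f : ℤ → G} (hf : Tendsto f cofinite (𝓝 0)) (j : ℤ) :
    HasSum (fun m ↦ f m - f (m + j)) 0 (symmetricIco ℤ) := by
  have step (i : ℤ) : HasSum (fun m ↦ f (m + i) - f (m + i + 1)) 0 (symmetricIco ℤ) := by
    simpa only [Function.comp_apply, add_right_comm] using
      hasSum_sub_add_one_symmetricIco (hf.comp (add_left_injective i).tendsto_cofinite)
  induction j with
  | zero => simp
  | succ j ih => simpa [add_assoc] using ih.add (step j)
  | pred j ih => simpa [add_assoc] using ih.sub (step (-j - 1))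

end Antisymmetric

lemma hasSum_zero_symmetricIco_of_antisymm {𝕜 : Type*} [Field 𝕜] [CharZero 𝕜] [TopologicalSpace 𝕜]
    [IsTopologicalRing 𝕜] {f : ℤ → 𝕜} (hf : Tendsto f cofinite (𝓝 0)) (r : ℤ)
    (h : ∀ m, f (r - m) = -f m) : HasSum f 0 (symmetricIco ℤ) := by
  have h_two : HasSum (fun m ↦ f m - f (m + (r + 1))) 0 (symmetricIco ℤ) :=
    hasSum_sub_add_symmetricIco hf _
  rw [hasSum_symmetricIco_int_iff] at h_two ⊢
  -- `m ↦ -1 - m` preserves `Ico (-N) N`.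
  have h_reflect (N : ℕ) :
      ∑ m ∈ Ico (-N : ℤ) N, f (m + (r + 1)) = -∑ m ∈ Ico (-N : ℤ) N, f m := by
    rw [← sum_neg_distrib]
    refine sum_bij' (fun m _ ↦ -1 - m) (fun m _ ↦ -1 - m)
      (by grind) (by grind) (by grind) (by grind) fun m _ ↦ ?_
    rw [← h]
    ring_nf
  simp only [sum_sub_distrib, h_reflect, sub_neg_eq_add, ← two_mul] at h_two
  simpa using h_two.const_mul (2⁻¹ : 𝕜)

lemma tendsto_one_div_linear_pow_cofinite {a : ℤ} (ha : a ≠ 0) (b : ℤ) {k : ℕ} (hk : k ≠ 0) :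
    Tendsto (fun m : ℤ ↦ 1 / (a * m + b : ℂ) ^ k) cofinite (𝓝 0) := by
  have h_inj : Function.Injective fun m : ℤ ↦ a * m + b :=
    (add_left_injective b).comp (mul_right_injective₀ ha)
  have h_lin : Tendsto (fun m : ℤ ↦ ((a * m + b : ℤ) : ℂ)) cofinite (Bornology.cobounded ℂ) := by
    have h := tendsto_intCast_atBot_sup_atTop_cobounded (α := ℂ)
    rw [← Int.cofinite_eq] at h
    exact h.comp h_inj.tendsto_cofinite
  have := (tendsto_inv₀_cobounded.comp h_lin).pow k
  simpa [zero_pow hk] using this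

lemma hasSum_one_div_linear_pow_of_odd {a b r : ℤ} (ha : a ≠ 0) (hr : a * r = -2 * b) {k : ℕ}
    (hk : Odd k) : HasSum (fun m : ℤ ↦ 1 / (a * m + b : ℂ) ^ k) 0 (symmetricIco ℤ) := by
  refine hasSum_zero_symmetricIco_of_antisymm
    (tendsto_one_div_linear_pow_cofinite ha b hk.pos.ne') r fun m ↦ ?_
  have hr' : (a * r : ℂ) = -2 * b := mod_cast hr
  have h_neg : (a * (r - m : ℤ) + b : ℂ) = -(a * m + b) := by
    push_cast
    linear_combination hr'
  rw [h_neg, hk.neg_pow, div_neg]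

section Even

variable {k : ℕ}

lemma summable_one_div_int_pow_complex (hk : 1 < k) : Summable fun m : ℤ ↦ 1 / (m : ℂ) ^ k := by
  simpa using Complex.ofRealCLM.summable (Real.summable_one_div_int_pow.mpr hk)

lemma hasSum_one_div_pnat_pow (hk : 1 < k) :
    HasSum (fun n : ℕ+ ↦ 1 / (n : ℂ) ^ k) (riemannZeta k) := by
  have h_nat : HasSum (fun n : ℕ ↦ 1 / (n : ℂ) ^ k) (riemannZeta k) := by
    rw [zeta_nat_eq_tsum_of_gt_one hk]
    exact ((summable_one_div_int_pow_complex hk).comp_injective Nat.cast_injective).hasSum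
  rw [hasSum_pnat_iff (f := fun n : ℕ ↦ 1 / (n : ℂ) ^ k)]
  simpa [show k ≠ 0 by lia] using h_nat

lemma hasSum_ite_even_one_div_pnat_pow (hk : 1 < k) :
    HasSum (fun n : ℕ+ ↦ if Even (n : ℕ) then 1 / (n : ℂ) ^ k else 0)
      (riemannZeta k / 2 ^ k) := by
  have h_inj : Function.Injective fun n : ℕ+ ↦ 2 * n := mul_right_injective 2
  rw [← h_inj.hasSum_iff]
  · refine ((hasSum_one_div_pnat_pow hk).div_const (2 ^ k)).congr_fun fun n ↦ ?_
    simp [mul_pow, div_eq_mul_inv, mul_comm]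
  · refine fun n hn ↦ if_neg fun ⟨j, hj⟩ ↦ hn ⟨⟨j, by have := n.pos; lia⟩, PNat.eq ?_⟩
    exact (hj.trans (two_mul j).symm).symm

lemma hasSum_ite_even_mul_one_div_pnat_pow (hk : 1 < k) (u v : ℂ) :
    HasSum (fun n : ℕ+ ↦ (if Even (n : ℕ) then u else v) * (1 / (n : ℂ) ^ k))
      ((v + (u - v) / 2 ^ k) * riemannZeta k) := by
  have h_value : (v + (u - v) / 2 ^ k) * riemannZeta k =
      v * riemannZeta k + (u - v) * (riemannZeta k / 2 ^ k) := by ring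
  rw [h_value]
  refine (((hasSum_one_div_pnat_pow hk).mul_left v).add
    ((hasSum_ite_even_one_div_pnat_pow hk).mul_left (u - v))).congr_fun fun n ↦ ?_
  split_ifs <;> ring

lemma hasSum_one_div_int_add_pow_of_even (hk : 1 < k) (hk' : Even k) (j : ℤ) :
    HasSum (fun m : ℤ ↦ 1 / (m + j : ℂ) ^ k) (2 * riemannZeta k) := by
  have h_sum : Summable fun m : ℤ ↦ 1 / (m : ℂ) ^ k := summable_one_div_int_pow_complex hk
  have h_zero : HasSum (fun m : ℤ ↦ 1 / (m : ℂ) ^ k) (2 * riemannZeta k) := by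
    rw [two_mul_riemannZeta_eq_tsum_int_inv_pow_of_even hk hk']
    simpa only [one_div] using h_sum.hasSum
  simpa [Function.comp_def] using (Equiv.addRight j).hasSum_iff.mpr h_zero

lemma hasSum_one_div_two_mul_int_pow_of_even (hk : 1 < k) (hk' : Even k) :
    HasSum (fun m : ℤ ↦ 1 / (2 * m : ℂ) ^ k) (2 / 2 ^ k * riemannZeta k) := by
  have h := (hasSum_one_div_int_add_pow_of_even hk hk' 0).div_const (2 ^ k)
  rw [mul_div_right_comm] at h
  refine h.congr_fun fun m ↦ ?_
  simp [mul_pow, div_eq_mul_inv, mul_comm]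

lemma hasSum_one_div_two_mul_int_add_one_pow_of_even (hk : 1 < k) (hk' : Even k) :
    HasSum (fun m : ℤ ↦ 1 / (2 * m + 1 : ℂ) ^ k) ((2 - 2 / 2 ^ k) * riemannZeta k) := by
  let f : ℤ → ℂ := fun m ↦ 1 / (m : ℂ) ^ k
  have h_all : HasSum f (2 * riemannZeta k) := by
    simpa [f] using hasSum_one_div_int_add_pow_of_even hk hk' 0
  have h_even : HasSum (fun m ↦ if Even m then f m else 0) (2 / 2 ^ k * riemannZeta k) := by
    rw [← (mul_right_injective₀ (two_ne_zero' ℤ)).hasSum_iff]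
    · simpa [f, Function.comp_def] using hasSum_one_div_two_mul_int_pow_of_even hk hk'
    · exact fun m hm ↦ if_neg fun h ↦ hm (h.exists_two_nsmul.imp fun j hj ↦ by simp [hj])
  have h_odd := h_all.sub h_even
  have h_inj : Function.Injective fun m : ℤ ↦ 2 * m + 1 :=
    (add_left_injective 1).comp (mul_right_injective₀ two_ne_zero)
  rw [← sub_mul, ← h_inj.hasSum_iff] at h_odd
  · refine h_odd.congr_fun fun m ↦ ?_
    rw [Function.comp_apply, if_neg (Int.not_even_two_mul_add_one m), sub_zero]
    simp [f]
  · intro m hm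
    rw [if_pos, sub_self]
    exact Int.not_odd_iff_even.mp fun ⟨j, hj⟩ ↦ hm ⟨j, hj.symm⟩

lemma hasSum_one_div_two_mul_int_add_pow_of_even (hk : 1 < k) (hk' : Even k) (q : ℤ) :
    HasSum (fun m : ℤ ↦ 1 / (2 * m + q : ℂ) ^ k)
      ((if Even q then 2 / 2 ^ k else 2 - 2 / 2 ^ k) * riemannZeta k) := by
  obtain ⟨j, rfl | rfl⟩ := q.even_or_odd'
  · rw [if_pos (even_two_mul j)]
    refine ((Equiv.addRight j).hasSum_iff.mpr
      (hasSum_one_div_two_mul_int_pow_of_even hk hk')).congr_fun fun m ↦ ?_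
    simp [mul_add]
  · rw [if_neg (Int.not_even_two_mul_add_one j)]
    refine ((Equiv.addRight j).hasSum_iff.mpr
      (hasSum_one_div_two_mul_int_add_one_pow_of_even hk hk')).congr_fun fun m ↦ ?_
    simp [mul_add, add_assoc]

end Even

lemma hasSum_ite_two_mul_add_eq_zero (q : ℤ) (v : ℂ) :
    HasSum (fun m : ℤ ↦ if 2 * m + q = 0 then v else 0) (if Even q then v else 0) := by
  obtain ⟨j, rfl | rfl⟩ := q.even_or_odd'
  · rw [if_pos (even_two_mul j)]
    refine (hasSum_ite_eq (-j) v).congr_fun fun m ↦ ?_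
    congr 1
    grind
  · rw [if_neg (Int.not_even_two_mul_add_one j)]
    refine hasSum_zero.congr_fun fun m ↦ if_neg (by lia)

end LatticeSums

lemma neg_pow_mul_neg_pow {M : Type*} [CommMonoid M] [HasDistribNeg M] (k : ℕ) (u v : M) :
    (-u) ^ k * (-v) ^ k = u ^ k * v ^ k := by
  rw [← mul_pow, neg_mul_neg, mul_pow]

lemma inv_abs_mul_inv_abs_le {k l : ℤ} (h : k ≠ l) :
    |(k : ℝ)|⁻¹ * |(l : ℝ)|⁻¹ ≤ 2 * |(l - k : ℝ)|⁻¹ := by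
  rcases eq_or_ne k 0 with rfl | hk
  · simp
  rcases eq_or_ne l 0 with rfl | hl
  · simp
  have hk' : 1 ≤ |(k : ℝ)| := mod_cast Int.one_le_abs hk
  have hl' : 1 ≤ |(l : ℝ)| := mod_cast Int.one_le_abs hl
  have h_sub : 0 < |(l - k : ℝ)| := abs_pos.mpr (sub_ne_zero.mpr (mod_cast h.symm))
  rw [← mul_inv, ← div_eq_mul_inv, inv_le_comm₀ (by positivity) (by positivity), inv_div,
    div_le_iff₀ two_pos]
  calc |(l - k : ℝ)| ≤ |(l : ℝ)| + |(k : ℝ)| := abs_sub _ _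
    _ ≤ |(k : ℝ)| * |(l : ℝ)| * 2 := by nlinarith

lemma norm_intCast_pow_inv_le {r s : ℕ} (hrs : r ≤ s) (k : ℤ) :
    ‖(k : ℂ) ^ s‖⁻¹ ≤ |(k : ℝ)|⁻¹ ^ r := by
  have h_one : |(k : ℝ)|⁻¹ ≤ 1 := by
    rcases eq_or_ne k 0 with rfl | hk
    · simp
    · exact inv_le_one_of_one_le₀ (mod_cast Int.one_le_abs hk)
  rw [norm_pow, Complex.norm_intCast, ← inv_pow]
  exact pow_le_pow_of_le_one (by positivity) h_one hrs

namespace zetaG2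

/-- The summand of `zetaG2`, extended to complex arguments; by `1 / 0 = 0` it vanishes wherever a
linear factor with a nonzero exponent does. -/
noncomputable def summand (s₁ s₂ s₃ s₄ s₅ s₆ : ℕ) (x y : ℂ) : ℂ :=
  1 / (x ^ s₁ * y ^ s₂ * (x + y) ^ s₃ * (x + 2 * y) ^ s₄ * (x + 3 * y) ^ s₅ *
    (2 * x + 3 * y) ^ s₆)

section Summand

variable {a b c d s₁ s₂ s₃ s₄ s₅ s₆ : ℕ}

lemma ofReal_zetaG2 :
    (zetaG2 s₁ s₂ s₃ s₄ s₅ s₆ : ℂ) = ∑' (m : ℕ+) (n : ℕ+), summand s₁ s₂ s₃ s₄ s₅ s₆ m n := by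
  simp [zetaG2, summand, Complex.ofReal_tsum]

lemma summand_zero_left (h : s₁ ≠ 0) (y : ℂ) : summand s₁ s₂ s₃ s₄ s₅ s₆ 0 y = 0 := by
  simp [summand, h]

lemma summand_zero_right (h : s₂ ≠ 0) (x : ℂ) : summand s₁ s₂ s₃ s₄ s₅ s₆ x 0 = 0 := by
  simp [summand, h]

-- Up to sign, `y ↦ -x - y` swaps `y` with `x + y` and `x + 3y` with `2x + 3y`.
lemma summand_reflect (hc : Odd c) (x y : ℂ) :
    summand a b b c d d x (-x - y) = -summand a b b c d d x y := by
  calc summand a b b c d d x (-x - y)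
    _ = 1 / (x ^ a * ((-(x + y)) ^ b * (-y) ^ b) * (-(x + 2 * y)) ^ c *
          ((-(2 * x + 3 * y)) ^ d * (-(x + 3 * y)) ^ d)) := by
      unfold summand
      ring_nf
    _ = -summand a b b c d d x y := by
      rw [neg_pow_mul_neg_pow, neg_pow_mul_neg_pow, hc.neg_pow, mul_neg, neg_mul, div_neg, summand]
      ring_nf

lemma summand_neg_neg (ha : Even a) (hc : Odd c) (x y : ℂ) :
    summand a b b c d d (-x) (-y) = -summand a b b c d d x y := by
  calc summand a b b c d d (-x) (-y)
    _ = 1 / ((-x) ^ a * ((-y) ^ b * (-(x + y)) ^ b) * (-(x + 2 * y)) ^ c *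
          ((-(x + 3 * y)) ^ d * (-(2 * x + 3 * y)) ^ d)) := by
      unfold summand
      ring_nf
    _ = -summand a b b c d d x y := by
      rw [neg_pow_mul_neg_pow, neg_pow_mul_neg_pow, ha.neg_pow, hc.neg_pow, mul_neg,
        neg_mul, div_neg, summand]
      ring_nf

end Summand

section Summable

variable {s₁ s₂ s₃ s₄ s₅ s₆ : ℕ}

lemma norm_summand_le (h₁ : 2 ≤ s₁) (h₂ : 1 ≤ s₂) (h₃ : 1 ≤ s₃) (h₄ : 1 ≤ s₄) (m n : ℤ) :
    ‖summand s₁ s₂ s₃ s₄ s₅ s₆ m n‖ ≤ 2 * (1 / (m : ℝ) ^ 2 * (1 / (n : ℝ) ^ 2)) := by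
  rcases eq_or_ne n 0 with rfl | hn
  · simp [summand_zero_right (show s₂ ≠ 0 by lia)]
  calc ‖summand s₁ s₂ s₃ s₄ s₅ s₆ m n‖
    _ = ‖(m : ℂ) ^ s₁‖⁻¹ * ‖(n : ℂ) ^ s₂‖⁻¹ * ‖((m + n : ℤ) : ℂ) ^ s₃‖⁻¹ *
          ‖((m + 2 * n : ℤ) : ℂ) ^ s₄‖⁻¹ * ‖((m + 3 * n : ℤ) : ℂ) ^ s₅‖⁻¹ *
          ‖((2 * m + 3 * n : ℤ) : ℂ) ^ s₆‖⁻¹ := by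
      push_cast
      simp only [summand, one_div, norm_inv, norm_mul, mul_inv]
    _ ≤ |(m : ℝ)|⁻¹ ^ 2 * |(n : ℝ)|⁻¹ ^ 1 * |((m + n : ℤ) : ℝ)|⁻¹ ^ 1 *
          |((m + 2 * n : ℤ) : ℝ)|⁻¹ ^ 1 *
          |((m + 3 * n : ℤ) : ℝ)|⁻¹ ^ 0 * |((2 * m + 3 * n : ℤ) : ℝ)|⁻¹ ^ 0 := by
      gcongr <;> exact norm_intCast_pow_inv_le (by lia) _
    _ = |(m : ℝ)|⁻¹ ^ 2 * |(n : ℝ)|⁻¹ *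
          (|((m + n : ℤ) : ℝ)|⁻¹ * |((m + 2 * n : ℤ) : ℝ)|⁻¹) := by ring
    _ ≤ |(m : ℝ)|⁻¹ ^ 2 * |(n : ℝ)|⁻¹ *
          (2 * |((m + 2 * n : ℤ) - (m + n : ℤ) : ℝ)|⁻¹) := by
      gcongr _ * ?_
      exact inv_abs_mul_inv_abs_le (by lia)
    _ = 2 * (|(m : ℝ)|⁻¹ ^ 2 * |(n : ℝ)|⁻¹ ^ 2) := by
      push_cast
      ring_nf
    _ = 2 * (1 / (m : ℝ) ^ 2 * (1 / (n : ℝ) ^ 2)) := by simp [inv_pow]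

lemma summable_summand (h₁ : 2 ≤ s₁) (h₂ : 1 ≤ s₂) (h₃ : 1 ≤ s₃) (h₄ : 1 ≤ s₄) :
    Summable fun p : ℤ × ℤ ↦ summand s₁ s₂ s₃ s₄ s₅ s₆ p.1 p.2 := by
  have h_sq : Summable fun m : ℤ ↦ 1 / (m : ℝ) ^ 2 :=
    Real.summable_one_div_int_pow.mpr one_lt_two
  exact .of_norm_bounded ((h_sq.mul_of_nonneg h_sq (fun _ ↦ by positivity)
    fun _ ↦ by positivity).mul_left 2) fun p ↦ norm_summand_le h₁ h₂ h₃ h₄ p.1 p.2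

end Summable

section Reduction

variable {a b c d : ℕ}

lemma tsum_summand_int_right_eq_zero (hc : Odd c) (m : ℤ) :
    ∑' n : ℤ, summand a b b c d d m n = 0 := by
  have h : ∑' n : ℤ, summand a b b c d d m n = -∑' n : ℤ, summand a b b c d d m n := by
    rw [← tsum_neg, ← (Equiv.subLeft (-m)).tsum_eq]
    simp [summand_reflect hc]
  exact self_eq_neg.mp h

lemma tsum_summand_neg_left (ha : 2 ≤ a) (ha' : Even a) (hb : 1 ≤ b) (hc : Odd c) (m : ℤ) :
    ∑' n : ℕ+, summand a b b c d d (-m : ℤ) n = ∑' n : ℕ+, summand a b b c d d m n := by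
  have h_sum := (summable_summand (s₅ := d) (s₆ := d) ha hb hb hc.pos).prod_factor m
  have h_zero := tsum_summand_int_right_eq_zero (a := a) (b := b) (d := d) hc m
  rw [tsum_int_eq_zero_add_tsum_pnat h_sum] at h_zero
  have h_neg (n : ℕ+) :
      summand a b b c d d m (-(n : ℤ) : ℤ) = -summand a b b c d d (-m : ℤ) n := by
    rw [← summand_neg_neg ha' hc]
    simp
  simp only [h_neg, tsum_neg, Int.cast_zero, Int.cast_natCast,
    summand_zero_right (by lia : b ≠ 0), zero_add] at h_zero
  linear_combination -h_zero

lemma two_mul_zetaG2_eq_tsum (ha : 2 ≤ a) (ha' : Even a) (hb : 1 ≤ b) (hc : Odd c) :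
    2 * (zetaG2 a b b c d d : ℂ) = ∑' (n : ℕ+) (m : ℤ), summand a b b c d d m n := by
  have h_sum : Summable (Function.uncurry fun (m : ℤ) (n : ℕ+) ↦ summand a b b c d d m n) := by
    have h_inj : Function.Injective fun n : ℕ+ ↦ (n : ℤ) :=
      Nat.cast_injective.comp PNat.coe_injective
    simpa [Function.comp_def, Function.uncurry_def] using
      (summable_summand (s₅ := d) (s₆ := d) ha hb hb hc.pos).comp_injective
        (Function.injective_id.prodMap h_inj)
  calc 2 * (zetaG2 a b b c d d : ℂ)
    _ = ∑' (m : ℤ) (n : ℕ+), summand a b b c d d m n := by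
      refine Eq.trans ?_ (tsum_int_eq_zero_add_tsum_pnat h_sum.prod).symm
      simp only [Function.uncurry_apply_pair, tsum_summand_neg_left ha ha' hb hc]
      simp [ofReal_zetaG2, summand_zero_left (by lia : a ≠ 0), two_mul]
    _ = ∑' (n : ℕ+) (m : ℤ), summand a b b c d d m n :=
      h_sum.tsum_comm.symm

end Reduction

section PartialFractions

/-- The even-order part of the partial fraction expansion of `summand 2 1 1 5 3 3 x y` in `x`. -/
noncomputable def evenPart (x y : ℂ) : ℂ :=
  (1 / 23328 * (1 / x ^ 2) + 139 / 8 * (1 / (x + 2 * y) ^ 2) -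
      49 / 2916 * (1 / (x + 3 * y) ^ 2) + 26624 / 729 * (1 / (2 * x + 3 * y) ^ 2)) *
      (1 / y ^ 13) +
    5 / 4 * (1 / (x + 2 * y) ^ 4) * (1 / y ^ 11)

/-- The odd-order part of the partial fraction expansion of `summand 2 1 1 5 3 3 x y` in `x`. -/
noncomputable def oddPart (x y : ℂ) : ℂ :=
  (-13 / 46656 * (1 / x ^ 1) + 1 / 8 * (1 / (x + y) ^ 1) + 3413 / 64 * (1 / (x + 2 * y) ^ 1) -
      49 / 648 * (1 / (x + 3 * y) ^ 1) - 77824 / 729 * (1 / (2 * x + 3 * y) ^ 1)) *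
      (1 / y ^ 14) +
    (83 / 16 * (1 / (x + 2 * y) ^ 3) - 1 / 486 * (1 / (x + 3 * y) ^ 3) -
      2048 / 243 * (1 / (2 * x + 3 * y) ^ 3)) * (1 / y ^ 12) +
    1 / 4 * (1 / (x + 2 * y) ^ 5) * (1 / y ^ 10)

/-- The excess of `evenPart m n + oddPart m n` over `summand 2 1 1 5 3 3 m n`: it vanishes away
from the poles, while at a pole `1 / 0 = 0` kills the summand and only the singular terms of the
expansion. -/
noncomputable def poleDefect (m n : ℤ) : ℂ :=
  ((if m = 0 then 277 / 279936 else 0) + (if m = -n then -(21 / 16) else 0) +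
    (if m = -2 * n then 9695 / 64 else 0) + (if m = -3 * n then -(8683 / 34992) else 0) +
    (if 2 * m + 3 * n = 0 then 536576 / 2187 else 0)) * (1 / (n : ℂ) ^ 15)

lemma summand_eq_evenPart_add_oddPart {x y : ℂ} (hx : x ≠ 0) (hy : y ≠ 0) (h₃ : x + y ≠ 0)
    (h₄ : x + 2 * y ≠ 0) (h₅ : x + 3 * y ≠ 0) (h₆ : 2 * x + 3 * y ≠ 0) :
    summand 2 1 1 5 3 3 x y = evenPart x y + oddPart x y := by
  -- `field_simp` normalizes the linear factors to these forms.
  have h₄' : x + y * 2 ≠ 0 := by rwa [mul_comm y]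
  have h₅' : x + y * 3 ≠ 0 := by rwa [mul_comm y]
  have h₆' : x * 2 + y * 3 ≠ 0 := by rwa [mul_comm x, mul_comm y]
  unfold summand evenPart oddPart
  field_simp
  ring

-- All three expressions are homogeneous of degree `-15` in `(x, y)`.
lemma summand_eq_of_right_eq_one {t c : ℂ}
    (h : summand 2 1 1 5 3 3 t 1 = evenPart t 1 + oddPart t 1 - c) (y : ℂ) :
    summand 2 1 1 5 3 3 (t * y) y =
      evenPart (t * y) y + oddPart (t * y) y - c * (1 / y ^ 15) := by
  have h_left (k : ℂ) : t * y + k * y = (t + k) * y := by ring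
  have h₃ : t * y + y = (t + 1) * y := by ring
  have h₆ : 2 * (t * y) + 3 * y = (2 * t + 3) * y := by ring
  have h_summand : summand 2 1 1 5 3 3 (t * y) y = summand 2 1 1 5 3 3 t 1 * (1 / y ^ 15) := by
    simp only [summand, h_left, h₃, h₆, mul_pow, one_div, mul_inv, mul_one]
    ring
  have h_even : evenPart (t * y) y = evenPart t 1 * (1 / y ^ 15) := by
    simp only [evenPart, h_left, h₆, mul_pow, one_div, mul_inv, mul_one]
    ring
  have h_odd : oddPart (t * y) y = oddPart t 1 * (1 / y ^ 15) := by
    simp only [oddPart, h_left, h₃, h₆, mul_pow, one_div, mul_inv, mul_one]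
    ring
  rw [h_summand, h_even, h_odd, h]
  ring

lemma summand_eq_of_pole {m n : ℤ} {t c : ℂ} (hm : (m : ℂ) = t * n)
    (h_defect : poleDefect m n = c * (1 / (n : ℂ) ^ 15))
    (h : summand 2 1 1 5 3 3 t 1 = evenPart t 1 + oddPart t 1 - c) :
    summand 2 1 1 5 3 3 m n = evenPart m n + oddPart m n - poleDefect m n := by
  rw [hm, h_defect, summand_eq_of_right_eq_one h]

lemma summand_eq_evenPart_add_oddPart_sub_poleDefect (m : ℤ) {n : ℤ} (hn : n ≠ 0) :
    summand 2 1 1 5 3 3 m n = evenPart m n + oddPart m n - poleDefect m n := by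
  by_cases h_pole : m = 0 ∨ m = -n ∨ m = -2 * n ∨ m = -3 * n ∨ 2 * m + 3 * n = 0
  · rcases h_pole with h | h | h | h | h
    · refine summand_eq_of_pole (t := 0) (c := 277 / 279936)
        (by simp [h]) (by grind [poleDefect]) ?_
      norm_num [summand, evenPart, oddPart]
    · refine summand_eq_of_pole (t := -1) (c := -(21 / 16))
        (by simp [h]) (by grind [poleDefect]) ?_
      norm_num [summand, evenPart, oddPart]
    · refine summand_eq_of_pole (t := -2) (c := 9695 / 64)
        (by simp [h]) (by grind [poleDefect]) ?_
      norm_num [summand, evenPart, oddPart]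
    · refine summand_eq_of_pole (t := -3) (c := -(8683 / 34992))
        (by simp [h]) (by grind [poleDefect]) ?_
      norm_num [summand, evenPart, oddPart]
    · have h' : (2 * m + 3 * n : ℂ) = 0 := mod_cast h
      refine summand_eq_of_pole (t := -(3 / 2)) (c := 536576 / 2187)
        (by linear_combination h' / 2) (by grind [poleDefect]) ?_
      norm_num [summand, evenPart, oddPart]
  · push Not at h_pole
    obtain ⟨h₁, h₃, h₄, h₅, h₆⟩ := h_pole
    rw [poleDefect, if_neg h₁, if_neg h₃, if_neg h₄, if_neg h₅, if_neg h₆,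
      summand_eq_evenPart_add_oddPart]
    · simp
    all_goals norm_cast
    all_goals lia

end PartialFractions

section ColumnSums

open SummationFilter

lemma hasSum_oddPart (n : ℤ) : HasSum (fun m : ℤ ↦ oddPart m n) 0 (symmetricIco ℤ) := by
  have h_shift (j : ℤ) {k : ℕ} (hk : Odd k) :
      HasSum (fun m : ℤ ↦ 1 / (m + j * n : ℂ) ^ k) 0 (symmetricIco ℤ) := by
    simpa using hasSum_one_div_linear_pow_of_odd (a := 1) (b := j * n) (r := -2 * (j * n))
      one_ne_zero (one_mul _) hk
  have h_double {k : ℕ} (hk : Odd k) :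
      HasSum (fun m : ℤ ↦ 1 / (2 * m + 3 * n : ℂ) ^ k) 0 (symmetricIco ℤ) := by
    simpa using hasSum_one_div_linear_pow_of_odd (a := 2) (b := 3 * n) (r := -(3 * n))
      two_ne_zero (by ring) hk
  have h₁ := ((((((h_shift 0 odd_one).mul_left (-13 / 46656)).add
    ((h_shift 1 odd_one).mul_left (1 / 8))).add ((h_shift 2 odd_one).mul_left (3413 / 64))).sub
    ((h_shift 3 odd_one).mul_left (49 / 648))).sub
    ((h_double odd_one).mul_left (77824 / 729))).mul_right (1 / (n : ℂ) ^ 14)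
  have h_three : Odd 3 := by decide
  have h₃ := ((((h_shift 2 h_three).mul_left (83 / 16)).sub
    ((h_shift 3 h_three).mul_left (1 / 486))).sub
    ((h_double h_three).mul_left (2048 / 243))).mul_right (1 / (n : ℂ) ^ 12)
  have h₅ := ((h_shift 2 (k := 5) (by decide)).mul_left (1 / 4)).mul_right (1 / (n : ℂ) ^ 10)
  simpa [oddPart] using (h₁.add h₃).add h₅

lemma hasSum_evenPart (n : ℤ) :
    HasSum (fun m : ℤ ↦ evenPart m n)
      ((1 / 23328 * (2 * riemannZeta 2) + 139 / 8 * (2 * riemannZeta 2) -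
          49 / 2916 * (2 * riemannZeta 2) +
          26624 / 729 * ((if Even n then 1 / 2 else 3 / 2) * riemannZeta 2)) * (1 / (n : ℂ) ^ 13) +
        5 / 4 * (2 * riemannZeta 4) * (1 / (n : ℂ) ^ 11)) := by
  have h_shift (j : ℤ) : HasSum (fun m : ℤ ↦ 1 / (m + j * n : ℂ) ^ 2) (2 * riemannZeta 2) := by
    simpa using hasSum_one_div_int_add_pow_of_even one_lt_two even_two (j * n)
  have h_double : HasSum (fun m : ℤ ↦ 1 / (2 * m + 3 * n : ℂ) ^ 2)
      ((if Even n then 1 / 2 else 3 / 2) * riemannZeta 2) := by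
    have h := hasSum_one_div_two_mul_int_add_pow_of_even one_lt_two even_two (3 * n)
    have h_even : (2 / 2 ^ 2 : ℂ) = 1 / 2 := by norm_num
    have h_odd : (2 - 1 / 2 : ℂ) = 3 / 2 := by norm_num
    simpa only [show Even (3 * n) ↔ Even n by grind, h_even, h_odd, Int.cast_mul, Int.cast_ofNat,
      Nat.cast_ofNat] using h
  have h_four : HasSum (fun m : ℤ ↦ 1 / (m + 2 * n : ℂ) ^ 4) (2 * riemannZeta 4) := by
    simpa using hasSum_one_div_int_add_pow_of_even (k := 4) (by simp) (by decide) (2 * n)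
  have h₂ := (((((h_shift 0).mul_left (1 / 23328)).add ((h_shift 2).mul_left (139 / 8))).sub
    ((h_shift 3).mul_left (49 / 2916))).add (h_double.mul_left (26624 / 729))).mul_right
    (1 / (n : ℂ) ^ 13)
  have h₄ := (h_four.mul_left (5 / 4)).mul_right (1 / (n : ℂ) ^ 11)
  exact (h₂.add h₄).congr_fun fun m ↦ by simp [evenPart]

lemma hasSum_poleDefect (n : ℤ) :
    HasSum (fun m : ℤ ↦ poleDefect m n)
      ((277 / 279936 - 21 / 16 + 9695 / 64 - 8683 / 34992 + if Even n then 536576 / 2187 else 0) *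
        (1 / (n : ℂ) ^ 15)) := by
  have h_double : HasSum (fun m : ℤ ↦ if 2 * m + 3 * n = 0 then (536576 / 2187 : ℂ) else 0)
      (if Even n then 536576 / 2187 else 0) := by
    simpa [show Even (3 * n) ↔ Even n by grind] using hasSum_ite_two_mul_add_eq_zero (3 * n) _
  have h := (((((hasSum_ite_eq 0 (277 / 279936 : ℂ)).add (hasSum_ite_eq (-n) (-(21 / 16)))).add
    (hasSum_ite_eq (-2 * n) (9695 / 64))).add (hasSum_ite_eq (-3 * n) (-(8683 / 34992)))).add
    h_double).mul_right (1 / (n : ℂ) ^ 15)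
  simpa only [poleDefect, sub_eq_add_neg] using h

lemma tsum_summand_int_left {n : ℤ} (hn : n ≠ 0) :
    ∑' m : ℤ, summand 2 1 1 5 3 3 m n =
      (1 / 23328 * (2 * riemannZeta 2) + 139 / 8 * (2 * riemannZeta 2) -
          49 / 2916 * (2 * riemannZeta 2) +
          26624 / 729 * ((if Even n then 1 / 2 else 3 / 2) * riemannZeta 2)) * (1 / (n : ℂ) ^ 13) +
        5 / 4 * (2 * riemannZeta 4) * (1 / (n : ℂ) ^ 11) -
      (277 / 279936 - 21 / 16 + 9695 / 64 - 8683 / 34992 + if Even n then 536576 / 2187 else 0) *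
        (1 / (n : ℂ) ^ 15) := by
  have h_summable : Summable fun m : ℤ ↦ summand 2 1 1 5 3 3 m n :=
    (summable_summand le_rfl le_rfl le_rfl (by simp)).prod_symm.prod_factor n
  have h_odd : HasSum (fun m : ℤ ↦ oddPart m n) _ :=
    ((h_summable.hasSum.sub (hasSum_evenPart n)).add (hasSum_poleDefect n)).congr_fun fun m ↦ by
      rw [summand_eq_evenPart_add_oddPart_sub_poleDefect m hn]
      ring
  have h_zero := HasSum.unique (h_odd.mono_left (symmetricIco ℤ).le_atTop) (hasSum_oddPart n)
  linear_combination h_zero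

lemma tsum_tsum_summand_int_left :
    ∑' (n : ℕ+) (m : ℤ), summand 2 1 1 5 3 3 m n =
      (5 / 2) * riemannZeta 4 * riemannZeta 11 +
        (1043857 / 11664) * riemannZeta 2 * riemannZeta 13 -
        (41971423 / 279936) * riemannZeta 15 := by
  have h₁₃ := (hasSum_ite_even_mul_one_div_pnat_pow (k := 13) (by simp)
    (2 * (1 / 23328 + 139 / 8 - 49 / 2916) + 1 / 2 * (26624 / 729))
    (2 * (1 / 23328 + 139 / 8 - 49 / 2916) + 3 / 2 * (26624 / 729))).mul_left (riemannZeta 2)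
  have h₁₁ := (hasSum_one_div_pnat_pow (k := 11) (by simp)).mul_left (5 / 2 * riemannZeta 4)
  have h₁₅ := hasSum_ite_even_mul_one_div_pnat_pow (k := 15) (by simp)
    (277 / 279936 - 21 / 16 + 9695 / 64 - 8683 / 34992 + 536576 / 2187)
    (277 / 279936 - 21 / 16 + 9695 / 64 - 8683 / 34992)
  have h := (h₁₃.add h₁₁).sub h₁₅
  have h_col (n : ℕ+) := tsum_summand_int_left (n := n) (mod_cast n.ne_zero)
  simp only [Int.cast_natCast, Int.even_coe_nat] at h_col
  simp only [h_col]
  refine (h.congr_fun fun n ↦ ?_).tsum_eq.trans ?_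
  · split_ifs <;> ring
  · push_cast
    ring

end ColumnSums

end zetaG2

theorem zetaG2_211533 :
    (zetaG2 2 1 1 5 3 3 : ℂ) =
      (5 / 4) * riemannZeta 4 * riemannZeta 11 + (1043857 / 23328) * riemannZeta 2 * riemannZeta 13 - (41971423 / 559872) * riemannZeta 15 := by
  have h_double := zetaG2.two_mul_zetaG2_eq_tsum (c := 5) (d := 3)
    le_rfl even_two le_rfl (by decide)
  rw [zetaG2.tsum_tsum_summand_int_left] at h_double
  linear_combination h_double / 2
end

section
/- The special value ζ₂(2,4,4,3,3,3; G₂) equals (1/8)·ζ(4)·ζ(15) + (281221/23328)·ζ(2)·ζ(17) − (11177971/559872)·ζ(19). -/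
/-!
Extend the summand to `ℤ × ℤ` with the convention `0⁻¹ = 0`. It is odd because its weight is odd,
so weighting it by `sign m + sign n` gives four times the sum over the positive quadrant. The
reflection `(m, n) ↦ (m, -m - n)` of the root system reverses the sign of the summand, which kills
the part weighted by `sign m`. In the part weighted by `sign n`, averaging over the reflection
`(m, n) ↦ (-m - 3n, n)` turns the summand into `-1 / 2` times the one with exponents
`(3, 3, 4, 4, 3, 2)`. For fixed `n` the latter is summed over `m` by partial fractions: odd powers
cancel, even powers give zeta values, and the poles contribute rational multiples of `n⁻¹⁹`.
-/

open Filter Topology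

/-! ### Sums over the integers -/

section Summation

lemma hasSum_comp_add_right {G E : Type*} [AddGroup G] [AddCommMonoid E] [TopologicalSpace E]
    {f : G → E} {a : E} (hf : HasSum f a) (c : G) : HasSum (fun m => f (m + c)) a :=
  (Equiv.addRight c).hasSum_iff.mpr hf

lemma hasSum_int_even_add_odd {E : Type*} [AddCommMonoid E] [TopologicalSpace E] [ContinuousAdd E]
    {f : ℤ → E} {a b : E} (ha : HasSum (fun m => f (2 * m)) a)
    (hb : HasSum (fun m => f (2 * m + 1)) b) : HasSum f (a + b) := by
  have heven : Function.Injective fun m : ℤ => 2 * m := mul_right_injective₀ two_ne_zero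
  have hodd : Function.Injective fun m : ℤ => 2 * m + 1 := (add_left_injective 1).comp heven
  refine (heven.hasSum_range_iff.mpr ha).add_isCompl ?_ (hodd.hasSum_range_iff.mpr hb)
  simpa [Function.comp_def] using Int.isCompl_even_odd

variable {E : Type*} [AddCommGroup E] [TopologicalSpace E] [IsTopologicalAddGroup E]

lemma hasSum_int_sub_add {f : ℤ → E} (hf : HasSum (fun m => f m - f (m + 1)) 0) (c : ℤ) :
    HasSum (fun m => f m - f (m + c)) 0 := by
  induction c using Int.induction_on with
  | zero => simp
  | succ k ih =>
    simpa [← add_assoc] using ih.add (hasSum_comp_add_right hf k)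
  | pred k ih =>
    simpa [add_assoc] using ih.sub (hasSum_comp_add_right hf (-k - 1))

variable [T2Space E]

lemma hasSum_zero_of_comp_equiv_eq_neg [IsAddTorsionFree E] {ι : Type*} {f : ι → E}
    (hf : Summable f) (e : ι ≃ ι) (he : ∀ i, f (e i) = -f i) : HasSum f 0 := by
  have hneg : HasSum f (-∑' i, f i) := by
    simpa [he] using ((e.hasSum_iff (f := f)).mpr hf.hasSum).neg
  have hzero : ∑' i, f i = 0 := self_eq_neg.mp (hf.hasSum.unique hneg)
  exact hzero ▸ hf.hasSum

lemma hasSum_int_sub_add_one {f : ℤ → E}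
    (hs : Summable fun m => f m - f (m + 1)) (hf : Tendsto f cofinite (𝓝 0)) :
    HasSum (fun m => f m - f (m + 1)) 0 := by
  have htop : Tendsto (fun n : ℕ => f n) atTop (𝓝 0) :=
    hf.comp (Nat.cofinite_eq_atTop ▸ Nat.cast_injective.tendsto_cofinite)
  have hbot : Tendsto (fun n : ℕ => f (-n)) atTop (𝓝 0) :=
    hf.comp (Nat.cofinite_eq_atTop ▸ (neg_injective.comp Nat.cast_injective).tendsto_cofinite)
  have hlim := SummationFilter.hasSum_symmetricIco_int_iff.mp
    (hs.hasSum.mono_left (SummationFilter.symmetricIco ℤ).le_atTop)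
  simp only [Finset.sum_Ico_int_sub] at hlim
  exact tendsto_nhds_unique hlim (by simpa using hbot.sub htop) ▸ hs.hasSum

end Summation

/-! ### Sign-weighted sums over the plane lattice -/

section Signs

lemma hasSum_indicator_quadrant {E : Type*} [AddCommMonoid E] [TopologicalSpace E]
    {f : ℤ × ℤ → E} {a : E} (hf : HasSum (fun p : ℕ+ × ℕ+ => f (p.1, p.2)) a) :
    HasSum ((Set.Ioi 0 ×ˢ Set.Ioi 0).indicator f) a := by
  have hcast : Function.Injective fun m : ℕ+ => (m : ℤ) :=
    Nat.cast_injective.comp PNat.coe_injective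
  refine ((hcast.prodMap hcast).hasSum_iff fun p hp => Set.indicator_of_notMem ?_ _).mp
    (hf.congr_fun fun p => by simp [Prod.map])
  rintro ⟨hm, hn⟩
  exact hp ⟨(⟨p.1.toNat, by simpa using hm⟩, ⟨p.2.toNat, by simpa using hn⟩),
    Prod.ext (Int.toNat_of_nonneg hm.le) (Int.toNat_of_nonneg hn.le)⟩

lemma sign_add_sign_mul {R : Type*} [Ring R] {f : ℤ × ℤ → R} (hneg : ∀ p, f (-p) = -f p)
    (hfst : ∀ n, f (0, n) = 0) (hsnd : ∀ m, f (m, 0) = 0) (p : ℤ × ℤ) :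
    ((p.1.sign : R) + p.2.sign) * f p =
      2 * ((Set.Ioi 0 ×ˢ Set.Ioi 0).indicator f p +
        (Set.Ioi 0 ×ˢ Set.Ioi 0).indicator f (-p)) := by
  obtain ⟨m, n⟩ := p
  have hneg' : f (-m, -n) = -f (m, n) := hneg (m, n)
  rcases lt_trichotomy m 0 with hm | rfl | hm
  · rcases lt_trichotomy n 0 with hn | rfl | hn
    · have htwo : (-1 + -1 : R) = -2 := by norm_num
      simp [Int.sign_eq_neg_one_of_neg, hm, hn, hn.le, hneg', htwo]
    · simp [hsnd]
    · simp [Int.sign_eq_neg_one_of_neg, Int.sign_eq_one_of_pos, hm, hn, hm.le, hn.le]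
  · simp [hfst]
  · rcases lt_trichotomy n 0 with hn | rfl | hn
    · simp [Int.sign_eq_neg_one_of_neg, Int.sign_eq_one_of_pos, hm, hn, hm.le, hn.le]
    · simp [hsnd]
    · simp [Int.sign_eq_one_of_pos, hm, hn, hn.le, one_add_one_eq_two]

lemma hasSum_sign_add_sign_mul {R : Type*} [Ring R] [TopologicalSpace R] [IsTopologicalSemiring R]
    {f : ℤ × ℤ → R} {a : R} (hneg : ∀ p, f (-p) = -f p)
    (hfst : ∀ n, f (0, n) = 0) (hsnd : ∀ m, f (m, 0) = 0)
    (hf : HasSum (fun p : ℕ+ × ℕ+ => f (p.1, p.2)) a) :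
    HasSum (fun p : ℤ × ℤ => ((p.1.sign : R) + p.2.sign) * f p) (4 * a) := by
  have hquadrant := hasSum_indicator_quadrant hf
  have hopposite : HasSum (fun p => (Set.Ioi 0 ×ˢ Set.Ioi 0).indicator f (-p)) a := by
    simpa [Function.comp_def] using! (Equiv.neg (ℤ × ℤ)).hasSum_iff.mpr hquadrant
  have hfour : 4 * a = 2 * (a + a) := by noncomm_ring
  rw [hfour]
  exact ((hquadrant.add hopposite).mul_left 2).congr_fun (sign_add_sign_mul hneg hfst hsnd)

lemma norm_sign_le_one (n : ℤ) : ‖(n.sign : ℂ)‖ ≤ 1 := by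
  rcases lt_trichotomy n 0 with hn | rfl | hn
  · simp [Int.sign_eq_neg_one_of_neg hn]
  · simp
  · simp [Int.sign_eq_one_of_pos hn]

lemma summable_sign_mul {ι : Type*} {f : ι → ℂ} (hf : Summable f) (u : ι → ℤ) :
    Summable fun i => ((u i).sign : ℂ) * f i :=
  .of_norm_bounded hf.norm fun i => by
    simpa using mul_le_mul_of_nonneg_right (norm_sign_le_one (u i)) (norm_nonneg (f i))

end Signs

/-! ### Sums of inverse powers of integers -/

section ZetaSums

lemma norm_inv_int_pow_le_one (k : ℕ) (n : ℤ) : ‖((n : ℂ) ^ k)⁻¹‖ ≤ 1 := by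
  rcases eq_or_ne n 0 with rfl | hn
  · rcases eq_or_ne k 0 with rfl | hk <;> simp [*]
  · have hone : (1 : ℝ) ≤ ‖(n : ℂ)‖ := by
      simpa using (mod_cast Int.one_le_abs hn : (1 : ℝ) ≤ |(n : ℝ)|)
    simpa using inv_le_one_of_one_le₀ (one_le_pow₀ hone)

variable {k : ℕ}

lemma summable_inv_int_pow (hk : 1 < k) : Summable fun n : ℤ => ((n : ℂ) ^ k)⁻¹ := by
  simpa using! EisensteinSeries.linear_right_summable 0 0 (k := k) (by exact_mod_cast hk)

lemma hasSum_inv_natAbs_pow (hk : 1 < k) :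
    HasSum (fun n : ℤ => ((n.natAbs : ℂ) ^ k)⁻¹) (2 * riemannZeta k) := by
  have hnat : HasSum (fun n : ℕ => ((n : ℂ) ^ k)⁻¹) (riemannZeta k) := by
    rw [zeta_nat_eq_tsum_of_gt_one hk]
    simpa using! ((summable_inv_int_pow hk).comp_injective Nat.cast_injective).hasSum
  have hsum := HasSum.of_nat_of_neg (f := fun n : ℤ => ((n.natAbs : ℂ) ^ k)⁻¹)
    (by simpa using hnat) (by simpa using hnat)
  simpa [two_mul, (zero_lt_one.trans hk).ne'] using hsum

lemma hasSum_inv_int_pow_of_even (hk : 1 < k) (heven : Even k) :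
    HasSum (fun n : ℤ => ((n : ℂ) ^ k)⁻¹) (2 * riemannZeta k) := by
  refine (hasSum_inv_natAbs_pow hk).congr_fun fun n => ?_
  rcases n.natAbs_eq with h | h <;> rw [h] <;> simp [heven.neg_pow]

lemma hasSum_inv_int_pow_of_odd (hk : 1 < k) (hodd : Odd k) :
    HasSum (fun n : ℤ => ((n : ℂ) ^ k)⁻¹) 0 :=
  hasSum_zero_of_comp_equiv_eq_neg (summable_inv_int_pow hk) (Equiv.neg ℤ)
    fun n => by simp [hodd.neg_pow, inv_neg]

lemma hasSum_inv_int_add_pow_of_even (hk : 1 < k) (heven : Even k) (c : ℤ) :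
    HasSum (fun m : ℤ => (((m : ℂ) + c) ^ k)⁻¹) (2 * riemannZeta k) := by
  simpa using hasSum_comp_add_right (hasSum_inv_int_pow_of_even hk heven) c

lemma hasSum_inv_int_add_pow_of_odd (hk : 1 < k) (hodd : Odd k) (c : ℤ) :
    HasSum (fun m : ℤ => (((m : ℂ) + c) ^ k)⁻¹) 0 := by
  simpa using hasSum_comp_add_right (hasSum_inv_int_pow_of_odd hk hodd) c

lemma hasSum_sign_mul_inv_int_pow_of_odd (hk : 1 < k) (hodd : Odd k) :
    HasSum (fun n : ℤ => (n.sign : ℂ) * ((n : ℂ) ^ k)⁻¹) (2 * riemannZeta k) := by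
  refine (hasSum_inv_natAbs_pow hk).congr_fun fun n => ?_
  rcases lt_trichotomy n 0 with hn | rfl | hn
  · simp [Int.sign_eq_neg_one_of_neg hn, Nat.cast_natAbs, abs_of_neg hn, hodd.neg_pow, inv_neg]
  · simp [hodd.pos.ne']
  · simp [Int.sign_eq_one_of_pos hn, Nat.cast_natAbs, abs_of_pos hn]

lemma hasSum_ite_even_sign_mul_inv_int_pow_of_odd (hk : 1 < k) (hodd : Odd k) :
    HasSum (fun n : ℤ => if Even n then (n.sign : ℂ) * ((n : ℂ) ^ k)⁻¹ else 0)
      (2 * riemannZeta k / 2 ^ k) := by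
  have heven := (hasSum_sign_mul_inv_int_pow_of_odd hk hodd).div_const (2 ^ k)
  rw [← add_zero (_ / _)]
  refine hasSum_int_even_add_odd (heven.congr_fun fun n => ?_)
    (hasSum_zero.congr_fun fun n => if_neg (Int.not_even_two_mul_add_one n))
  have hsign : (2 : ℤ).sign = 1 := rfl
  simp only [even_two_mul, if_true, Int.sign_mul, hsign, one_mul, Int.cast_mul, mul_pow]
  push_cast
  ring

lemma hasSum_inv_two_mul_add_pow_of_even (hk : 1 < k) (heven : Even k) (c : ℤ) :
    HasSum (fun m : ℤ => ((2 * (m : ℂ) + c) ^ k)⁻¹)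
      (if Even c then 2 * riemannZeta k / 2 ^ k
        else 2 * riemannZeta k - 2 * riemannZeta k / 2 ^ k) := by
  have hall := hasSum_inv_int_pow_of_even hk heven
  have hdouble : HasSum (fun m : ℤ => (((2 * m : ℤ) : ℂ) ^ k)⁻¹) (2 * riemannZeta k / 2 ^ k) := by
    simpa [mul_pow, div_eq_mul_inv] using hall.mul_right ((2 ^ k : ℂ)⁻¹)
  have hodd : HasSum (fun m : ℤ => (((2 * m + 1 : ℤ) : ℂ) ^ k)⁻¹)
      (2 * riemannZeta k - 2 * riemannZeta k / 2 ^ k) := by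
    have hsummable : Summable fun m : ℤ => (((2 * m + 1 : ℤ) : ℂ) ^ k)⁻¹ :=
      hall.summable.comp_injective fun a b h => by simpa using h
    have hsplit := hall.unique (hasSum_int_even_add_odd hdouble hsummable.hasSum)
    exact eq_sub_of_add_eq' hsplit.symm ▸ hsummable.hasSum
  rcases Int.even_or_odd' c with ⟨d, rfl | rfl⟩
  · simpa [mul_add] using hasSum_comp_add_right hdouble d
  · rw [if_neg (Int.not_even_two_mul_add_one d)]
    simpa [mul_add, add_assoc] using hasSum_comp_add_right hodd d

lemma hasSum_inv_int_add_sub_inv_int_add (a b : ℤ) :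
    HasSum (fun m : ℤ => ((m : ℂ) + a)⁻¹ - ((m : ℂ) + b)⁻¹) 0 := by
  have hsummable : Summable fun m : ℤ => (m : ℂ)⁻¹ - ((m + 1 : ℤ) : ℂ)⁻¹ := by
    refine (EisensteinSeries.summable_linear_left_mul_linear_left one_ne_zero 0 1).congr_cofinite ?_
    filter_upwards [eventually_cofinite_ne 0, eventually_cofinite_ne (-1)] with m h0 h1
    have h0' : (m : ℂ) ≠ 0 := by exact_mod_cast h0
    have h1' : (m : ℂ) + 1 ≠ 0 := by exact_mod_cast fun h => h1 (by lia)
    simp only [Int.cast_zero, Int.cast_one, add_zero, Int.cast_add]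
    field_simp
    ring
  have hlim : Tendsto (fun m : ℤ => (m : ℝ)⁻¹) cofinite (𝓝 0) :=
    tendsto_inv₀_cobounded.comp (Metric.cobounded_eq_cocompact (α := ℝ) ▸ Int.tendsto_coe_cofinite)
  have hlim' : Tendsto (fun m : ℤ => (m : ℂ)⁻¹) cofinite (𝓝 0) := by
    simpa [Function.comp_def] using (Complex.continuous_ofReal.tendsto 0).comp hlim
  simpa [add_assoc] using
    hasSum_comp_add_right (hasSum_int_sub_add (hasSum_int_sub_add_one hsummable hlim') (b - a)) a

end ZetaSums

/-! ### The summand and its reflections -/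

section Field

variable {K : Type*} [Field K]

/-- The summand of the zeta-function of the root system `G₂`, as a function on a field. Since
`0⁻¹ = 0`, it vanishes on every line on which one of its factors with nonzero exponent does. -/
def g2Term (s₁ s₂ s₃ s₄ s₅ s₆ : ℕ) (x y : K) : K :=
  (x ^ s₁ * y ^ s₂ * (x + y) ^ s₃ * (x + 2 * y) ^ s₄ * (x + 3 * y) ^ s₅ * (2 * x + 3 * y) ^ s₆)⁻¹

variable (s₁ s₂ s₃ s₄ s₅ s₆ : ℕ) (x y : K)

lemma g2Term_neg_neg : g2Term s₁ s₂ s₃ s₄ s₅ s₆ (-x) (-y) =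
    (-1) ^ (s₁ + s₂ + s₃ + s₄ + s₅ + s₆) * g2Term s₁ s₂ s₃ s₄ s₅ s₆ x y := by
  have h₃ : -x + -y = -(x + y) := by ring
  have h₄ : -x + 2 * -y = -(x + 2 * y) := by ring
  have h₅ : -x + 3 * -y = -(x + 3 * y) := by ring
  have h₆ : 2 * -x + 3 * -y = -(2 * x + 3 * y) := by ring
  simp only [g2Term, h₃, h₄, h₅, h₆, neg_pow x, neg_pow y, neg_pow (_ + _), mul_inv, ← inv_pow,
    inv_neg, inv_one, pow_add]
  ring

lemma g2Term_neg_sub_right : g2Term s₁ s₂ s₃ s₄ s₅ s₆ x (-x - y) =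
    (-1) ^ (s₂ + s₃ + s₄ + s₅ + s₆) * g2Term s₁ s₃ s₂ s₄ s₆ s₅ x y := by
  have h₂ : -x - y = -(x + y) := by ring
  have h₃ : x + -(x + y) = -y := by ring
  have h₄ : x + 2 * -(x + y) = -(x + 2 * y) := by ring
  have h₅ : x + 3 * -(x + y) = -(2 * x + 3 * y) := by ring
  have h₆ : 2 * x + 3 * -(x + y) = -(x + 3 * y) := by ring
  simp only [g2Term, h₂, h₃, h₄, h₅, h₆, neg_pow y, neg_pow (_ + _), mul_inv, ← inv_pow,
    inv_neg, inv_one, pow_add]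
  ring

lemma g2Term_neg_sub_left : g2Term s₁ s₂ s₃ s₄ s₅ s₆ (-x - 3 * y) y =
    (-1) ^ (s₁ + s₃ + s₄ + s₅ + s₆) * g2Term s₅ s₂ s₄ s₃ s₁ s₆ x y := by
  have h₁ : -x - 3 * y = -(x + 3 * y) := by ring
  have h₃ : -(x + 3 * y) + y = -(x + 2 * y) := by ring
  have h₄ : -(x + 3 * y) + 2 * y = -(x + y) := by ring
  have h₅ : -(x + 3 * y) + 3 * y = -x := by ring
  have h₆ : 2 * -(x + 3 * y) + 3 * y = -(2 * x + 3 * y) := by ring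
  simp only [g2Term, h₁, h₃, h₄, h₅, h₆, neg_pow x, neg_pow (_ + _), mul_inv, ← inv_pow,
    inv_neg, inv_one, pow_add]
  ring

lemma g2Term_sub_g2Term :
    g2Term (s₁ + 1) (s₂ + 2) (s₃ + 2) (s₄ + 1) (s₅ + 2) (s₆ + 2) x y -
      g2Term (s₁ + 2) (s₂ + 2) (s₃ + 1) (s₄ + 2) (s₅ + 1) (s₆ + 2) x y =
    -g2Term (s₁ + 2) (s₂ + 1) (s₃ + 2) (s₄ + 2) (s₅ + 2) (s₆ + 1) x y := by
  have hfactor : x * (x + 2 * y) - (x + y) * (x + 3 * y) = -(y * (2 * x + 3 * y)) := by ring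
  unfold g2Term
  generalize x + y = a, x + 2 * y = b, x + 3 * y = c, 2 * x + 3 * y = d at *
  rcases eq_or_ne x 0 with rfl | hx
  · simp
  rcases eq_or_ne y 0 with rfl | hy
  · simp
  rcases eq_or_ne a 0 with rfl | ha
  · simp
  rcases eq_or_ne b 0 with rfl | hb
  · simp
  rcases eq_or_ne c 0 with rfl | hc
  · simp
  rcases eq_or_ne d 0 with rfl | hd
  · simp
  field_simp
  linear_combination
    (x * x ^ s₁ * a * a ^ s₃ * b * b ^ s₄ * c * c ^ s₅ * y * y ^ s₂ * d * d ^ s₆) * hfactor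

lemma g2Term_244333_add_reflection :
    g2Term 2 4 4 3 3 3 x y + g2Term 2 4 4 3 3 3 (-x - 3 * y) y = -g2Term 3 3 4 4 3 2 x y := by
  rw [g2Term_neg_sub_left, ← g2Term_sub_g2Term 1 2 2 2 1 1]
  ring

/-- The partial fraction expansion of `-g2Term 3 3 4 4 3 2 x y` in the variable `x`. Since
`0⁻¹ = 0`, its value at a pole is the value there of the sum of the remaining terms. -/
def g2PartialFraction (x y : K) : K :=
  1 / 8 * (y ^ 15)⁻¹ * (((x + y) ^ 4)⁻¹ + ((x + 2 * y) ^ 4)⁻¹)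
    - (y ^ 16)⁻¹ * (1 / 3888 * ((x ^ 3)⁻¹ - ((x + 3 * y) ^ 3)⁻¹)
      + 13 / 16 * (((x + y) ^ 3)⁻¹ - ((x + 2 * y) ^ 3)⁻¹))
    + (y ^ 17)⁻¹ * (25 / 11664 * ((x ^ 2)⁻¹ + ((x + 3 * y) ^ 2)⁻¹)
      + 29 / 8 * (((x + y) ^ 2)⁻¹ + ((x + 2 * y) ^ 2)⁻¹)
      + 16384 / 729 * ((2 * x + 3 * y) ^ 2)⁻¹)
    - (y ^ 18)⁻¹ * (227 / 23328 * (x⁻¹ - (x + 3 * y)⁻¹)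
      + 411 / 32 * ((x + y)⁻¹ - (x + 2 * y)⁻¹))

lemma g2PartialFraction_neg_sub : g2PartialFraction (-x - 3 * y) y = g2PartialFraction x y := by
  have h₁ : -x - 3 * y = -(x + 3 * y) := by ring
  have h₂ : -(x + 3 * y) + y = -(x + 2 * y) := by ring
  have h₃ : -(x + 3 * y) + 2 * y = -(x + y) := by ring
  have h₄ : -(x + 3 * y) + 3 * y = -x := by ring
  have h₅ : 2 * -(x + 3 * y) + 3 * y = -(2 * x + 3 * y) := by ring
  simp only [g2PartialFraction, h₁, h₂, h₃, h₄, h₅, neg_pow x, neg_pow (_ + _), mul_inv, inv_neg]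
  ring

variable [CharZero K] {x y}

lemma g2PartialFraction_of_ne (hx : x ≠ 0) (hy : y ≠ 0) (h₁ : x + y ≠ 0)
    (h₂ : x + 2 * y ≠ 0) (h₃ : x + 3 * y ≠ 0) (h₄ : 2 * x + 3 * y ≠ 0) :
    g2PartialFraction x y = -g2Term 3 3 4 4 3 2 x y := by
  unfold g2PartialFraction g2Term
  generalize ha : x + y = a, hb : x + 2 * y = b, hc : x + 3 * y = c, hd : 2 * x + 3 * y = d at *
  field_simp
  rw [← ha, ← hb, ← hc, ← hd]
  ring

lemma g2PartialFraction_zero (y : K) : g2PartialFraction 0 y = 1117 / 34992 * (y ^ 19)⁻¹ := by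
  rcases eq_or_ne y 0 with rfl | hy
  · simp [g2PartialFraction]
  simp only [g2PartialFraction, zero_add, mul_zero]
  field_simp
  norm_num

lemma g2PartialFraction_neg_self (y : K) : g2PartialFraction (-y) y = 5107 / 128 * (y ^ 19)⁻¹ := by
  rcases eq_or_ne y 0 with rfl | hy
  · simp [g2PartialFraction]
  have h₂ : -y + 2 * y = y := by ring
  have h₃ : -y + 3 * y = 2 * y := by ring
  have h₄ : 2 * -y + 3 * y = y := by ring
  simp only [g2PartialFraction, h₂, h₃, h₄, neg_add_cancel]
  field_simp
  norm_num

lemma g2PartialFraction_neg_three_mul_two_mul (z : K) :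
    g2PartialFraction (-(3 * z)) (2 * z) = 212992 / 2187 * ((2 * z) ^ 19)⁻¹ := by
  rcases eq_or_ne z 0 with rfl | hz
  · simp [g2PartialFraction]
  have h₁ : -(3 * z) + 2 * z = -z := by ring
  have h₂ : -(3 * z) + 2 * (2 * z) = z := by ring
  have h₃ : -(3 * z) + 3 * (2 * z) = 3 * z := by ring
  have h₄ : 2 * -(3 * z) + 3 * (2 * z) = 0 := by ring
  simp only [g2PartialFraction, h₁, h₂, h₃, h₄]
  field_simp
  norm_num

end Field

/-! ### Summation along rows -/

section Row

/-- For `n ≠ 0`, the value of `g2PartialFraction m n` when `m` is one of its poles, and `0`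
otherwise; it corrects the expansion to `-g2Term 3 3 4 4 3 2 m n`, which is `0` at the poles. -/
noncomputable def g2PolarDefect (m n : ℤ) : ℂ :=
  ((n : ℂ) ^ 19)⁻¹ * (1117 / 34992 * ((if m = 0 then 1 else 0) + (if m = -3 * n then 1 else 0))
    + 5107 / 128 * ((if m = -n then 1 else 0) + (if m = -2 * n then 1 else 0))
    + 212992 / 2187 * (if 2 * m = -3 * n then 1 else 0))

lemma g2PartialFraction_of_pole {m n : ℤ} (hn : n ≠ 0)
    (hpole : m = 0 ∨ m = -3 * n ∨ m = -n ∨ m = -2 * n ∨ 2 * m = -3 * n) :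
    g2PartialFraction (m : ℂ) n = g2PolarDefect m n := by
  rcases hpole with h | h | h | h | h
  · have hvalue : g2PartialFraction (m : ℂ) n = 1117 / 34992 * ((n : ℂ) ^ 19)⁻¹ := by
      simp [h, g2PartialFraction_zero]
    rw [hvalue, g2PolarDefect]
    split_ifs <;> first | lia | ring
  · have hvalue : g2PartialFraction (m : ℂ) n = 1117 / 34992 * ((n : ℂ) ^ 19)⁻¹ := by
      rw [← g2PartialFraction_zero, ← g2PartialFraction_neg_sub 0, h]
      congr 1
      push_cast
      ring
    rw [hvalue, g2PolarDefect]
    split_ifs <;> first | lia | ring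
  · have hvalue : g2PartialFraction (m : ℂ) n = 5107 / 128 * ((n : ℂ) ^ 19)⁻¹ := by
      simp [h, g2PartialFraction_neg_self]
    rw [hvalue, g2PolarDefect]
    split_ifs <;> first | lia | ring
  · have hvalue : g2PartialFraction (m : ℂ) n = 5107 / 128 * ((n : ℂ) ^ 19)⁻¹ := by
      rw [← g2PartialFraction_neg_self, ← g2PartialFraction_neg_sub (-(n : ℂ)), h]
      congr 1
      push_cast
      ring
    rw [hvalue, g2PolarDefect]
    split_ifs <;> first | lia | ring
  · have hvalue : g2PartialFraction (m : ℂ) n = 212992 / 2187 * ((n : ℂ) ^ 19)⁻¹ := by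
      obtain ⟨z, rfl, rfl⟩ : ∃ z, m = -(3 * z) ∧ n = 2 * z := ⟨-m - n, by lia, by lia⟩
      simp [g2PartialFraction_neg_three_mul_two_mul]
    rw [hvalue, g2PolarDefect]
    split_ifs <;> first | lia | ring

lemma g2PartialFraction_add_g2Term {m n : ℤ} (hn : n ≠ 0) :
    g2PartialFraction (m : ℂ) n + g2Term 3 3 4 4 3 2 (m : ℂ) n = g2PolarDefect m n := by
  by_cases hpole : m = 0 ∨ m = -3 * n ∨ m = -n ∨ m = -2 * n ∨ 2 * m = -3 * n
  · have hzero : g2Term 3 3 4 4 3 2 (m : ℂ) n = 0 := by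
      rcases hpole with rfl | rfl | rfl | rfl | h
      on_goal 5 => have h' : 2 * (m : ℂ) = -3 * n := mod_cast h
      all_goals simp [g2Term, *]
    rw [g2PartialFraction_of_pole hn hpole, hzero, add_zero]
  · have hdefect : g2PolarDefect m n = 0 := by
      rw [g2PolarDefect]
      split_ifs <;> first | lia | ring
    rw [hdefect, g2PartialFraction_of_ne, neg_add_cancel] <;> norm_cast <;> lia

lemma hasSum_g2PolarDefect (n : ℤ) : HasSum (fun m => g2PolarDefect m n)
    (((n : ℂ) ^ 19)⁻¹ * (1117 / 34992 * (1 + 1) + 5107 / 128 * (1 + 1)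
      + 212992 / 2187 * (if Even n then 1 else 0))) := by
  have hdouble : HasSum (fun m : ℤ => if 2 * m = -3 * n then (1 : ℂ) else 0)
      (if Even n then 1 else 0) := by
    rcases Int.even_or_odd' n with ⟨d, rfl | rfl⟩
    · have hpole (m : ℤ) : 2 * m = -3 * (2 * d) ↔ m = -3 * d := by lia
      simp only [hpole, even_two_mul, if_true]
      exact hasSum_ite_eq _ 1
    · have hpole (m : ℤ) : 2 * m ≠ -3 * (2 * d + 1) := by lia
      simp only [hpole, Int.not_even_two_mul_add_one, if_false]
      exact hasSum_zero
  exact ((((hasSum_ite_eq 0 1).add (hasSum_ite_eq _ 1)).mul_left _).add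
    (((hasSum_ite_eq _ 1).add (hasSum_ite_eq _ 1)).mul_left _) |>.add
      (hdouble.mul_left _)).mul_left _

lemma hasSum_g2PartialFraction (n : ℤ) : HasSum (fun m : ℤ => g2PartialFraction (m : ℂ) n)
    (riemannZeta 4 / 2 * ((n : ℂ) ^ 15)⁻¹ + (140611 / 2916 - if Even n then 16384 / 729 else 0) *
      riemannZeta 2 * ((n : ℂ) ^ 17)⁻¹) := by
  have h₄ := hasSum_inv_int_add_pow_of_even (k := 4) (by norm_num) (by decide)
  have h₃ := hasSum_inv_int_add_pow_of_odd (k := 3) (by norm_num) (by decide)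
  have h₂ := hasSum_inv_int_add_pow_of_even (k := 2) (by norm_num) (by decide)
  have h₁ := hasSum_inv_int_add_sub_inv_int_add
  have hdouble := hasSum_inv_two_mul_add_pow_of_even (k := 2) (by norm_num) (by decide) (3 * n)
  have hquartic := ((h₄ n).add (h₄ (2 * n))).mul_left (1 / 8 * ((n : ℂ) ^ 15)⁻¹)
  have hcubic := ((((h₃ 0).sub (h₃ (3 * n))).mul_left (1 / 3888)).add
    (((h₃ n).sub (h₃ (2 * n))).mul_left (13 / 16))).mul_left ((n : ℂ) ^ 16)⁻¹
  have hquadratic := ((((h₂ 0).add (h₂ (3 * n))).mul_left (25 / 11664)).add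
    (((h₂ n).add (h₂ (2 * n))).mul_left (29 / 8)) |>.add
      (hdouble.mul_left (16384 / 729))).mul_left ((n : ℂ) ^ 17)⁻¹
  have hlinear := (((h₁ 0 (3 * n)).mul_left (227 / 23328)).add
    ((h₁ n (2 * n)).mul_left (411 / 32))).mul_left ((n : ℂ) ^ 18)⁻¹
  have hsum : HasSum (fun m : ℤ => g2PartialFraction (m : ℂ) n) _ :=
    (((hquartic.sub hcubic).add hquadratic).sub hlinear).congr_fun
      fun m => by simp [g2PartialFraction]
  convert hsum using 1
  have hthree : ¬ Even (3 : ℤ) := by decide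
  simp only [Int.even_mul, hthree, false_or]
  split_ifs <;> push_cast <;> ring

/-- The sum of `-g2Term 3 3 4 4 3 2 m n` over all integers `m`, for a fixed nonzero `n`. The parity
of `n` enters because `2 * m + 3 * n` runs over the integers of the same parity as `n`. -/
noncomputable def g2RowSum (n : ℤ) : ℂ :=
  riemannZeta 4 / 2 * ((n : ℂ) ^ 15)⁻¹
    + (140611 / 2916 - if Even n then 16384 / 729 else 0) * riemannZeta 2 * ((n : ℂ) ^ 17)⁻¹
    - (11177945 / 139968 + if Even n then 212992 / 2187 else 0) * ((n : ℂ) ^ 19)⁻¹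

lemma hasSum_neg_g2Term_334432 {n : ℤ} (hn : n ≠ 0) :
    HasSum (fun m : ℤ => -g2Term 3 3 4 4 3 2 (m : ℂ) n) (g2RowSum n) := by
  have hsum : HasSum (fun m : ℤ => -g2Term 3 3 4 4 3 2 (m : ℂ) n) _ :=
    ((hasSum_g2PartialFraction n).sub (hasSum_g2PolarDefect n)).congr_fun
      fun m => by rw [← g2PartialFraction_add_g2Term hn, sub_add_cancel_left]
  convert hsum using 1
  rw [g2RowSum]
  split_ifs <;> ring

lemma hasSum_sign_mul_g2RowSum : HasSum (fun n : ℤ => (n.sign : ℂ) * g2RowSum n)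
    (riemannZeta 4 * riemannZeta 15 + 281221 / 2916 * riemannZeta 2 * riemannZeta 17
      - 11177971 / 69984 * riemannZeta 19) := by
  have hall (k : ℕ) (hk : 1 < k) (hodd : Odd k) :=
    hasSum_sign_mul_inv_int_pow_of_odd hk hodd
  have heven (k : ℕ) (hk : 1 < k) (hodd : Odd k) :=
    hasSum_ite_even_sign_mul_inv_int_pow_of_odd hk hodd
  have h₁₅ := (hall 15 (by norm_num) (by decide)).mul_left (riemannZeta 4 / 2)
  have h₁₇ := ((hall 17 (by norm_num) (by decide)).mul_left (140611 / 2916)).sub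
    ((heven 17 (by norm_num) (by decide)).mul_left (16384 / 729)) |>.mul_left (riemannZeta 2)
  have h₁₉ := ((hall 19 (by norm_num) (by decide)).mul_left (11177945 / 139968)).add
    ((heven 19 (by norm_num) (by decide)).mul_left (212992 / 2187))
  have hsum : HasSum (fun n : ℤ => (n.sign : ℂ) * g2RowSum n) _ :=
    ((h₁₅.add h₁₇).sub h₁₉).congr_fun fun n => by
      rw [g2RowSum]
      split_ifs <;> ring
  convert hsum using 1
  push_cast
  ring

end Row

/-! ### Summation over the lattice -/

section DoubleSum

variable {s₁ s₂ s₃ s₄ s₅ s₆ : ℕ}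

lemma norm_g2Term_intCast_le (m n : ℤ) :
    ‖g2Term s₁ s₂ s₃ s₄ s₅ s₆ (m : ℂ) n‖ ≤ ‖((m : ℂ) ^ s₁)⁻¹‖ * ‖((n : ℂ) ^ s₂)⁻¹‖ := by
  have h₃ := norm_inv_int_pow_le_one s₃ (m + n)
  have h₄ := norm_inv_int_pow_le_one s₄ (m + 2 * n)
  have h₅ := norm_inv_int_pow_le_one s₅ (m + 3 * n)
  have h₆ := norm_inv_int_pow_le_one s₆ (2 * m + 3 * n)
  push_cast at h₃ h₄ h₅ h₆
  simp only [g2Term, mul_inv, norm_mul]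
  refine mul_le_of_le_one_right (by positivity) h₆ |>.trans ?_
  refine mul_le_of_le_one_right (by positivity) h₅ |>.trans ?_
  refine mul_le_of_le_one_right (by positivity) h₄ |>.trans ?_
  exact mul_le_of_le_one_right (by positivity) h₃

lemma summable_g2Term (h₁ : 1 < s₁) (h₂ : 1 < s₂) :
    Summable fun p : ℤ × ℤ => g2Term s₁ s₂ s₃ s₄ s₅ s₆ (p.1 : ℂ) p.2 :=
  .of_norm_bounded ((summable_inv_int_pow h₁).norm.mul_of_nonneg (summable_inv_int_pow h₂).norm
    (fun _ => norm_nonneg _) fun _ => norm_nonneg _) fun p => norm_g2Term_intCast_le p.1 p.2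

lemma hasSum_zetaG2 (h₁ : 1 < s₁) (h₂ : 1 < s₂) :
    HasSum (fun p : ℕ+ × ℕ+ => g2Term s₁ s₂ s₃ s₄ s₅ s₆ ((p.1 : ℤ) : ℂ) (p.2 : ℤ))
      (zetaG2 s₁ s₂ s₃ s₄ s₅ s₆ : ℂ) := by
  have hcast : Function.Injective fun m : ℕ+ => (m : ℤ) :=
    Nat.cast_injective.comp PNat.coe_injective
  have hsummable : Summable fun p : ℕ+ × ℕ+ =>
      g2Term s₁ s₂ s₃ s₄ s₅ s₆ ((p.1 : ℤ) : ℂ) (p.2 : ℤ) := by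
    simpa [Function.comp_def] using!
      (summable_g2Term h₁ h₂).comp_injective (hcast.prodMap hcast)
  have htsum : ∑' p : ℕ+ × ℕ+, g2Term s₁ s₂ s₃ s₄ s₅ s₆ ((p.1 : ℤ) : ℂ) (p.2 : ℤ) =
      (zetaG2 s₁ s₂ s₃ s₄ s₅ s₆ : ℂ) := by
    rw [hsummable.tsum_prod]
    simp [zetaG2, g2Term, Complex.ofReal_tsum]
  exact hsummable.hasSum_iff.mpr htsum

lemma hasSum_sign_add_sign_mul_g2Term (h₁ : 1 < s₁) (h₂ : 1 < s₂)
    (hodd : Odd (s₁ + s₂ + s₃ + s₄ + s₅ + s₆)) :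
    HasSum (fun p : ℤ × ℤ =>
        ((p.1.sign : ℂ) + p.2.sign) * g2Term s₁ s₂ s₃ s₄ s₅ s₆ (p.1 : ℂ) p.2)
      (4 * zetaG2 s₁ s₂ s₃ s₄ s₅ s₆) := by
  have h₁' : s₁ ≠ 0 := by lia
  have h₂' : s₂ ≠ 0 := by lia
  exact hasSum_sign_add_sign_mul (fun p => by simp [g2Term_neg_neg, hodd.neg_one_pow])
    (fun n => by simp [g2Term, h₁']) (fun m => by simp [g2Term, h₂']) (hasSum_zetaG2 h₁ h₂)

lemma hasSum_sign_fst_mul_g2Term (h₁ : 1 < s₁) (h₂ : 1 < s₂) (hodd : Odd s₄) :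
    HasSum (fun p : ℤ × ℤ => (p.1.sign : ℂ) * g2Term s₁ s₂ s₂ s₄ s₅ s₅ (p.1 : ℂ) p.2) 0 := by
  have hinv : Function.Involutive fun p : ℤ × ℤ => (p.1, -p.1 - p.2) := fun p => by simp
  refine hasSum_zero_of_comp_equiv_eq_neg
    (summable_sign_mul (summable_g2Term h₁ h₂) Prod.fst) hinv.toPerm fun p => ?_
  have hpow : (-1 : ℂ) ^ (s₂ + s₂ + s₄ + s₅ + s₅) = -1 := Odd.neg_one_pow (by grind)
  simp [g2Term_neg_sub_right, hpow]

lemma hasSum_sign_snd_mul_g2Term (h₁ : 1 < s₁) (h₂ : 1 < s₂) (heven : Even s₁) (hodd : Odd s₄) :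
    HasSum (fun p : ℤ × ℤ => (p.2.sign : ℂ) * g2Term s₁ s₂ s₂ s₄ s₅ s₅ (p.1 : ℂ) p.2)
      (4 * zetaG2 s₁ s₂ s₂ s₄ s₅ s₅) := by
  have hsum := (hasSum_sign_add_sign_mul_g2Term h₁ h₂
    (by grind : Odd (s₁ + s₂ + s₂ + s₄ + s₅ + s₅))).sub
      (hasSum_sign_fst_mul_g2Term (s₅ := s₅) h₁ h₂ hodd)
  simpa [add_mul] using hsum

lemma hasSum_sign_snd_mul_neg_g2Term_334432 :
    HasSum (fun p : ℤ × ℤ => (p.2.sign : ℂ) * -g2Term 3 3 4 4 3 2 (p.1 : ℂ) p.2)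
      (8 * zetaG2 2 4 4 3 3 3) := by
  have hinv : Function.Involutive fun p : ℤ × ℤ => (-p.1 - 3 * p.2, p.2) := fun p => by simp
  have hsum : HasSum (fun p : ℤ × ℤ => (p.2.sign : ℂ) * g2Term 2 4 4 3 3 3 (p.1 : ℂ) p.2) _ :=
    hasSum_sign_snd_mul_g2Term (by norm_num) (by norm_num) (by decide) (by decide)
  convert (hsum.add (hinv.toPerm.hasSum_iff.mpr hsum)).congr_fun fun p => ?_ using 1
  · ring
  · simp [← g2Term_244333_add_reflection, mul_add]

end DoubleSum

theorem zetaG2_244333 :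
    (zetaG2 2 4 4 3 3 3 : ℂ) =
      (1 / 8) * riemannZeta 4 * riemannZeta 15 + (281221 / 23328) * riemannZeta 2 * riemannZeta 17 - (11177971 / 559872) * riemannZeta 19 := by
  have hdouble : HasSum (fun p : ℤ × ℤ => (p.1.sign : ℂ) * -g2Term 3 3 4 4 3 2 (p.2 : ℂ) p.1)
      (8 * zetaG2 2 4 4 3 3 3) :=
    (Equiv.prodComm ℤ ℤ).hasSum_iff.mpr hasSum_sign_snd_mul_neg_g2Term_334432
  have hrow (n : ℤ) : HasSum (fun m : ℤ => (n.sign : ℂ) * -g2Term 3 3 4 4 3 2 (m : ℂ) n)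
      (n.sign * g2RowSum n) := by
    rcases eq_or_ne n 0 with rfl | hn
    · simp
    · exact (hasSum_neg_g2Term_334432 hn).mul_left _
  linear_combination (1 / 8 : ℂ) *
    (hdouble.prod_fiberwise hrow).unique hasSum_sign_mul_g2RowSum
end
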